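/- Let L : ℝ^m × ℝ^N × (ℝ^N)^m → ℝ be a smooth first-order Lagrangian, η : ℝ^m → ℝ^m a smooth diffeomorphism, and φ : ℝ^m → ℝ^N smooth. Define the covariantized Lagrangian L̃(x,b,J,y,v) := L(b, y, v·J⁻¹)·det J for b ∈ ℝ^m, J an invertible m×m matrix, y ∈ ℝ^N, v ∈ (ℝ^N)^m, where (v·J⁻¹)^A_c = Σ_μ v^A_μ (J⁻¹)^μ_c, evaluated along the section s(x) = (x, η(x), Dη(x), φ(x), Dφ(x)). Then the Euler–Lagrange equations of L̃ with respect to φ, namely (∂L̃/∂y^A)(s(x)) − Σ_μ (d/dx^μ)[(∂L̃/∂v^A_μ)(s(x))] = 0 for all A and all x ∈ ℝ^m, hold if and only if ψ := φ∘η⁻¹ satisfies the Euler–Lagrange equations of L, namely (∂L/∂y^A)(j¹ψ(b)) − Σ_c (d/db^c)[(∂L/∂v^A_c)(j¹ψ(b))] = 0 for all A and all b ∈ ℝ^m, where j¹ψ(b) = (b, ψ(b), Dψ(b)). -/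

import Mathlib

noncomputable section

/-- Jacobian matrix of `η : ℝ^m → ℝ^m`: `(jacobian η x) a μ = ∂η^a/∂x^μ (x)`. -/
def jacobian {m : ℕ} (η : (Fin m → ℝ) → (Fin m → ℝ)) (x : Fin m → ℝ) :
    Fin m → Fin m → ℝ :=
  fun a μ => fderiv ℝ η x (Pi.single μ 1) a

/-- First-jet multivelocities of a field `φ : ℝ^m → ℝ^N`: `(jet1 φ x) A μ = ∂φ^A/∂x^μ (x)`. -/
def jet1 {m N : ℕ} (φ : (Fin m → ℝ) → (Fin N → ℝ)) (x : Fin m → ℝ) :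
    Fin N → Fin m → ℝ :=
  fun A μ => fderiv ℝ φ x (Pi.single μ 1) A

/-- The covariantized Lagrangian `L̃(x,b,J,y,v) = L(b, y, v·J⁻¹) · det J`. -/
def Ltilde {m N : ℕ}
    (L : (Fin m → ℝ) × (Fin N → ℝ) × (Fin N → Fin m → ℝ) → ℝ) :
    (Fin m → ℝ) × (Fin m → ℝ) × (Fin m → Fin m → ℝ) × (Fin N → ℝ) ×
      (Fin N → Fin m → ℝ) → ℝ :=
  fun p =>
    L (p.2.1, p.2.2.2.1, fun A c => ∑ μ : Fin m, p.2.2.2.2 A μ * (Matrix.of p.2.2.1)⁻¹ μ c)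
      * (Matrix.of p.2.2.1).det

/-- The section `s(x) = (x, η(x), Dη(x), φ(x), Dφ(x))`. -/
def covSect {m N : ℕ} (η : (Fin m → ℝ) → (Fin m → ℝ))
    (φ : (Fin m → ℝ) → (Fin N → ℝ)) (x : Fin m → ℝ) :
    (Fin m → ℝ) × (Fin m → ℝ) × (Fin m → Fin m → ℝ) × (Fin N → ℝ) ×
      (Fin N → Fin m → ℝ) :=
  (x, η x, jacobian η x, φ x, jet1 φ x)

/-! By the chain rule, the derivatives of `L̃` along `s` in the directions of `y` and `v` come from
those of `L` along `j¹ψ ∘ η`; in particular the momenta of `L̃` are the Piola transform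
`adj(Dη) · (p ∘ η)` of the momenta `p` of `L`. Its divergence is `det Dη · (div p) ∘ η`, because the
vector fields `∑ μ, adj(Dη)^μ_c ∂_μ` are divergence free. Hence
`δL̃/δφ = det Dη · (δL/δψ) ∘ η`, where `det Dη` vanishes nowhere and `η` is surjective. -/

section Determinant

theorem differentiableAt_update {𝕜 E ι : Type*} [NontriviallyNormedField 𝕜]
    [NormedAddCommGroup E] [NormedSpace 𝕜 E] [DecidableEq ι] {F : ι → Type*}
    [∀ k, NormedAddCommGroup (F k)] [∀ k, NormedSpace 𝕜 (F k)] {M : E → ∀ k, F k} {x : E}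
    (hM : DifferentiableAt 𝕜 M x) (j : ι) (w : F j) :
    DifferentiableAt 𝕜 (fun y => Function.update (M y) j w) x := by
  refine differentiableAt_pi.2 fun k => ?_
  rcases eq_or_ne k j with rfl | hk
  · simp only [Function.update_self, differentiableAt_const]
  · simp only [Function.update_of_ne hk]
    exact differentiableAt_pi.1 hM k

variable {n : Type*} [Fintype n]

theorem sum_mul_eq_zero_of_symm_of_antisymm {R : Type*} [NonUnitalNonAssocRing R]
    [IsAddTorsionFree R] {S T : n → n → R} (hS : ∀ i j, S i j = S j i)
    (hT : ∀ i j, T i j = -T j i) : ∑ i, ∑ j, S i j * T i j = 0 := by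
  have hneg : ∑ i, ∑ j, S i j * T i j = -∑ i, ∑ j, S i j * T i j := by
    conv_lhs => rw [Finset.sum_comm]
    simp only [← Finset.sum_neg_distrib]
    refine Finset.sum_congr rfl fun i _ => Finset.sum_congr rfl fun j _ => ?_
    rw [hS j i, hT j i, mul_neg]
  exact self_eq_neg.1 hneg

variable [DecidableEq n]

theorem det_updateRow_eq_sum {R : Type*} [CommRing R] (A : Matrix n n R) (i : n) (w : n → R) :
    (A.updateRow i w).det = ∑ j, w j * (A.updateRow i (Pi.single j 1)).det := by
  rw [Matrix.det_eq_sum_mul_adjugate_row _ i]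
  simp only [Matrix.updateRow_self, Matrix.adjugate_apply, Matrix.updateRow_idem]

theorem det_updateRow_updateRow_swap {R : Type*} [CommRing R] (A : Matrix n n R) {i j : n}
    (hij : i ≠ j) (v w : n → R) :
    ((A.updateRow i v).updateRow j w).det = -((A.updateRow i w).updateRow j v).det := by
  have hswap : ((A.updateRow i v).updateRow j w).submatrix (Equiv.swap i j) id
      = (A.updateRow i w).updateRow j v := by
    ext k l
    rcases eq_or_ne k i with rfl | hki
    · simp [hij]
    rcases eq_or_ne k j with rfl | hkj
    · simp [hij]
    · simp [Equiv.swap_apply_of_ne_of_ne hki hkj, hki, hkj]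
  rw [← hswap, Matrix.det_permute, Equiv.Perm.sign_swap hij]
  simp

variable {𝕜 E : Type*} [NontriviallyNormedField 𝕜] [NormedAddCommGroup E] [NormedSpace 𝕜 E]

/-- The determinant as a continuous multilinear function of the rows, which is what makes the
differential calculus of multilinear maps available for it. -/
def detContinuousMultilinear (𝕜 n : Type*) [NontriviallyNormedField 𝕜] [Fintype n]
    [DecidableEq n] : ContinuousMultilinearMap 𝕜 (fun _ : n => n → 𝕜) 𝕜 where
  toMultilinearMap := (Matrix.detRowAlternating (R := 𝕜) (n := n)).toMultilinearMap
  cont := Continuous.matrix_det (A := fun M : n → n → 𝕜 => Matrix.of M) continuous_id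

theorem differentiableAt_det {M : E → n → n → 𝕜} {x : E} (hM : DifferentiableAt 𝕜 M x) :
    DifferentiableAt 𝕜 (fun y => (Matrix.of (M y)).det) x :=
  ((detContinuousMultilinear 𝕜 n).hasFDerivAt (M x)).differentiableAt.comp x hM

theorem fderiv_det_apply {M : E → n → n → 𝕜} {x : E} (hM : DifferentiableAt 𝕜 M x) (v : E) :
    fderiv 𝕜 (fun y => (Matrix.of (M y)).det) x v
      = ∑ i, ((Matrix.of (M x)).updateRow i (fderiv 𝕜 (fun y => M y i) x v)).det := by
  have hdet := ((detContinuousMultilinear 𝕜 n).hasFDerivAt (M x)).comp x hM.hasFDerivAt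
  refine (DFunLike.congr_fun hdet.fderiv v).trans ?_
  rw [ContinuousLinearMap.comp_apply, ContinuousMultilinearMap.linearDeriv_apply]
  refine Finset.sum_congr rfl fun i _ => ?_
  rw [fderiv_apply hM]
  rfl

theorem differentiableAt_adjugate_apply {M : E → n → n → 𝕜} {x : E}
    (hM : DifferentiableAt 𝕜 M x) (i j : n) :
    DifferentiableAt 𝕜 (fun y => (Matrix.of (M y)).adjugate i j) x := by
  simp only [Matrix.adjugate_apply]
  exact differentiableAt_det (differentiableAt_update hM j _)

theorem differentiableAt_inv_apply {M : E → n → n → 𝕜} {x : E} (hM : DifferentiableAt 𝕜 M x)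
    (hdet : (Matrix.of (M x)).det ≠ 0) (i j : n) :
    DifferentiableAt 𝕜 (fun y => (Matrix.of (M y))⁻¹ i j) x := by
  simp only [Matrix.inv_def, Ring.inverse_eq_inv', Matrix.smul_apply, smul_eq_mul]
  exact ((differentiableAt_det hM).inv hdet).mul (differentiableAt_adjugate_apply hM i j)

theorem fderiv_adjugate_apply {M : E → n → n → 𝕜} {x : E} (hM : DifferentiableAt 𝕜 M x)
    (i j : n) (v : E) :
    fderiv 𝕜 (fun y => (Matrix.of (M y)).adjugate i j) x v
      = ∑ k ∈ Finset.univ.erase j, (((Matrix.of (M x)).updateRow j (Pi.single i 1)).updateRow k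
          (fderiv 𝕜 (fun y => M y k) x v)).det := by
  simp only [Matrix.adjugate_apply]
  refine (fderiv_det_apply (differentiableAt_update hM j (Pi.single i 1)) v).trans ?_
  rw [← Finset.add_sum_erase _ _ (Finset.mem_univ j)]
  have hconst : ((Matrix.of (Function.update (M x) j (Pi.single i 1))).updateRow j
      (fderiv 𝕜 (fun y => Function.update (M y) j (Pi.single i 1) j) x v)).det = 0 := by
    simp only [Function.update_self, fderiv_fun_const]
    exact Matrix.det_eq_zero_of_row_eq_zero j fun l => by simp
  rw [hconst, zero_add]
  refine Finset.sum_congr rfl fun k hk => ?_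
  simp only [Function.update_of_ne (Finset.ne_of_mem_erase hk)]
  rfl

end Determinant

section Divergence

variable {n : Type*} [Fintype n] [DecidableEq n]

/-- The divergence `∑ μ, ∂F^μ/∂x^μ` of a vector field on `ℝⁿ`. Each component is differentiated
separately, as in the total derivatives `d/dx^μ` of the Euler–Lagrange equations. -/
def divergence (F : (n → ℝ) → n → ℝ) (x : n → ℝ) : ℝ :=
  ∑ μ, fderiv ℝ (fun y => F y μ) x (Pi.single μ 1)

theorem divergence_mulVec {k : Type*} [Fintype k] {A : (n → ℝ) → Matrix n k ℝ}
    {G : (n → ℝ) → k → ℝ} {x : n → ℝ}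
    (hA : ∀ i j, DifferentiableAt ℝ (fun y => A y i j) x) (hG : DifferentiableAt ℝ G x) :
    divergence (fun y => (A y).mulVec (G y)) x
      = ∑ c, G x c * divergence (fun y μ => A y μ c) x
        + (A x * (fderiv ℝ G x : (n → ℝ) →ₗ[ℝ] k → ℝ).toMatrix').trace := by
  have hterm : ∀ μ, fderiv ℝ (fun y => (A y).mulVec (G y) μ) x (Pi.single μ 1)
      = ∑ c, (G x c * fderiv ℝ (fun y => A y μ c) x (Pi.single μ 1)
          + A x μ c * fderiv ℝ G x (Pi.single μ 1) c) := by
    intro μ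
    have h := HasFDerivAt.fun_sum (u := Finset.univ) fun c _ =>
      (hA μ c).hasFDerivAt.fun_mul (hasFDerivAt_pi'.1 hG.hasFDerivAt c)
    refine (DFunLike.congr_fun h.fderiv _).trans ?_
    simp [add_comm]
  simp only [divergence, hterm, Finset.sum_add_distrib, Finset.mul_sum]
  rw [Finset.sum_comm]
  simp [Matrix.trace, Matrix.mul_apply, LinearMap.toMatrix'_apply]

/-- Differentiating an adjugate entry leaves determinants with two rows of `J` replaced; these
alternate in the two coordinates in which `hcurl` makes the derivatives of `J` symmetric. -/
theorem divergence_adjugate_eq_zero {J : (n → ℝ) → n → n → ℝ} {x : n → ℝ}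
    (hJ : DifferentiableAt ℝ J x)
    (hcurl : ∀ k μ ν, fderiv ℝ (fun y => J y k) x (Pi.single μ 1) ν
      = fderiv ℝ (fun y => J y k) x (Pi.single ν 1) μ) (c : n) :
    divergence (fun y μ => (Matrix.of (J y)).adjugate μ c) x = 0 := by
  simp only [divergence, fderiv_adjugate_apply hJ]
  rw [Finset.sum_comm]
  refine Finset.sum_eq_zero fun k hk => ?_
  simp only [det_updateRow_eq_sum _ k (fderiv ℝ (fun y => J y k) x _)]
  exact sum_mul_eq_zero_of_symm_of_antisymm (hcurl k) fun μ ν =>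
    det_updateRow_updateRow_swap _ (Finset.ne_of_mem_erase hk).symm _ _

theorem divergence_eq_trace {F : (n → ℝ) → n → ℝ} {x : n → ℝ} (hF : DifferentiableAt ℝ F x) :
    divergence F x = (fderiv ℝ F x : (n → ℝ) →ₗ[ℝ] n → ℝ).toMatrix'.trace := by
  simp [divergence, Matrix.trace, LinearMap.toMatrix'_apply, fderiv_apply hF]

end Divergence

section Jet

variable {m N : ℕ}

theorem jacobian_eq_jet1 (η : (Fin m → ℝ) → Fin m → ℝ) : jacobian η = jet1 η :=
  rfl

theorem of_jet1 (φ : (Fin m → ℝ) → Fin N → ℝ) (x : Fin m → ℝ) :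
    Matrix.of (jet1 φ x) = (fderiv ℝ φ x : (Fin m → ℝ) →ₗ[ℝ] Fin N → ℝ).toMatrix' := by
  ext A μ
  simp [jet1, LinearMap.toMatrix'_apply]

theorem of_jet1_comp {k : ℕ} {φ : (Fin m → ℝ) → Fin N → ℝ} {η : (Fin k → ℝ) → Fin m → ℝ}
    {x : Fin k → ℝ} (hφ : DifferentiableAt ℝ φ (η x)) (hη : DifferentiableAt ℝ η x) :
    Matrix.of (jet1 (φ ∘ η) x) = Matrix.of (jet1 φ (η x)) * Matrix.of (jet1 η x) := by
  rw [of_jet1, of_jet1, of_jet1, fderiv_comp x hφ hη, ContinuousLinearMap.toLinearMap_comp,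
    LinearMap.toMatrix'_comp]

theorem jacobian_mul_jacobian {η η' : (Fin m → ℝ) → Fin m → ℝ} {x : Fin m → ℝ}
    (hη : DifferentiableAt ℝ η x) (hη' : DifferentiableAt ℝ η' (η x))
    (hinv : Function.LeftInverse η' η) :
    Matrix.of (jacobian η' (η x)) * Matrix.of (jacobian η x) = 1 := by
  refine (of_jet1_comp hη' hη).symm.trans ?_
  rw [hinv.comp_eq_id, of_jet1, fderiv_id, ContinuousLinearMap.coe_id, LinearMap.toMatrix'_id]

theorem det_jacobian_ne_zero {η η' : (Fin m → ℝ) → Fin m → ℝ} {x : Fin m → ℝ}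
    (hη : DifferentiableAt ℝ η x) (hη' : DifferentiableAt ℝ η' (η x))
    (hinv : Function.LeftInverse η' η) : (Matrix.of (jacobian η x)).det ≠ 0 :=
  Matrix.det_ne_zero_of_left_inverse (jacobian_mul_jacobian hη hη' hinv)

theorem differentiableAt_jet1 {φ : (Fin m → ℝ) → Fin N → ℝ} {x : Fin m → ℝ}
    (hφ : ContDiffAt ℝ 2 φ x) : DifferentiableAt ℝ (jet1 φ) x := by
  have hφ' : DifferentiableAt ℝ (fderiv ℝ φ) x :=
    (hφ.fderiv_right (m := 1) (by norm_num)).differentiableAt (by norm_num)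
  refine differentiableAt_pi.2 fun A => differentiableAt_pi.2 fun μ => ?_
  unfold jet1
  fun_prop

theorem fderiv_jet1_symm {φ : (Fin m → ℝ) → Fin N → ℝ} {x : Fin m → ℝ}
    (hφ : ContDiffAt ℝ 2 φ x) (A : Fin N) (μ ν : Fin m) :
    fderiv ℝ (fun y => jet1 φ y A) x (Pi.single μ 1) ν
      = fderiv ℝ (fun y => jet1 φ y A) x (Pi.single ν 1) μ := by
  have hφ' : DifferentiableAt ℝ (fderiv ℝ φ) x :=
    (hφ.fderiv_right (m := 1) (by norm_num)).differentiableAt (by norm_num)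
  have hsnd : ∀ v ν, fderiv ℝ (fun y => jet1 φ y A) x v ν
      = fderiv ℝ (fderiv ℝ φ) x v (Pi.single ν 1) A := by
    intro v ν
    have hrow := differentiableAt_pi.1 (differentiableAt_jet1 hφ) A
    have hdir := hφ'.clm_apply (differentiableAt_const (Pi.single ν (1 : ℝ)))
    calc fderiv ℝ (fun y => jet1 φ y A) x v ν
        = fderiv ℝ (fun y => fderiv ℝ φ y (Pi.single ν 1) A) x v :=
          (DFunLike.congr_fun (fderiv_apply hrow ν) v).symm
      _ = fderiv ℝ (fun y => fderiv ℝ φ y (Pi.single ν 1)) x v A :=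
          DFunLike.congr_fun (fderiv_apply hdir A) v
      _ = fderiv ℝ (fderiv ℝ φ) x v (Pi.single ν 1) A := by
          rw [fderiv_clm_apply hφ' (differentiableAt_const _)]
          simp
  rw [hsnd, hsnd, (hφ.isSymmSndFDerivAt (by simp)).eq]

theorem divergence_adjugate_jacobian_mulVec {η F : (Fin m → ℝ) → Fin m → ℝ} {x : Fin m → ℝ}
    (hη : ContDiffAt ℝ 2 η x) (hF : DifferentiableAt ℝ F (η x)) :
    divergence (fun y => (Matrix.of (jacobian η y)).adjugate.mulVec (F (η y))) x
      = (Matrix.of (jacobian η x)).det * divergence F (η x) := by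
  have hηd : DifferentiableAt ℝ η x := hη.differentiableAt (by norm_num)
  have hpiola : ∀ c, divergence (fun y μ => (Matrix.of (jacobian η y)).adjugate μ c) x = 0 :=
    divergence_adjugate_eq_zero (differentiableAt_jet1 hη) (fderiv_jet1_symm hη)
  have hadj : ∀ i j, DifferentiableAt ℝ (fun y => (Matrix.of (jacobian η y)).adjugate i j) x :=
    differentiableAt_adjugate_apply (differentiableAt_jet1 hη)
  refine (divergence_mulVec hadj (hF.comp x hηd)).trans ?_
  simp only [hpiola, mul_zero, Finset.sum_const_zero, zero_add]
  rw [fderiv_comp x hF hηd, ContinuousLinearMap.toLinearMap_comp, LinearMap.toMatrix'_comp,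
    ← of_jet1 η, ← jacobian_eq_jet1, ← Matrix.mul_assoc, Matrix.trace_mul_cycle,
    Matrix.mul_adjugate, Matrix.smul_mul, Matrix.one_mul, Matrix.trace_smul, smul_eq_mul,
    divergence_eq_trace hF]

end Jet

section EulerLagrange

variable {m N : ℕ} {L : (Fin m → ℝ) × (Fin N → ℝ) × (Fin N → Fin m → ℝ) → ℝ}
  {η η' : (Fin m → ℝ) → Fin m → ℝ} {φ ψ : (Fin m → ℝ) → Fin N → ℝ} {x b : Fin m → ℝ}

/-- The multivelocity `v·K`, with `(v·K)^A_c = ∑ μ, v^A_μ K^μ_c`, as a linear function of `v`: the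
product of matrices, on the function type that `L` takes as its last argument. -/
def velocityMul {k : ℕ} (K : Matrix (Fin m) (Fin k) ℝ) :
    (Fin N → Fin m → ℝ) →ₗ[ℝ] Fin N → Fin k → ℝ :=
  K.vecMulLinear.compLeft (Fin N)

theorem velocityMul_single {k : ℕ} (K : Matrix (Fin m) (Fin k) ℝ) (A : Fin N) (w : Fin m → ℝ) :
    velocityMul K (Pi.single A w) = Pi.single A (Matrix.vecMul w K) :=
  Pi.single_op (fun _ => K.vecMulLinear) (fun _ => map_zero _) A w |>.symm

theorem jet1_comp_leftInverse (hη : DifferentiableAt ℝ η x) (hη' : DifferentiableAt ℝ η' (η x))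
    (hinv : Function.LeftInverse η' η) (hφ : DifferentiableAt ℝ φ x) :
    jet1 (φ ∘ η') (η x) = velocityMul (Matrix.of (jacobian η x))⁻¹ (jet1 φ x) := by
  rw [Matrix.inv_eq_left_inv (jacobian_mul_jacobian hη hη' hinv)]
  have hchain := of_jet1_comp (φ := φ) ((hinv x).symm ▸ hφ) hη'
  rw [hinv x] at hchain
  exact hchain

/-- The canonical momenta `∂L/∂v^A_c` of the field component `A` along `j¹ψ`, as a vector field
on `ℝ^m`. -/
def momentum (L : (Fin m → ℝ) × (Fin N → ℝ) × (Fin N → Fin m → ℝ) → ℝ)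
    (ψ : (Fin m → ℝ) → Fin N → ℝ) (A : Fin N) (b : Fin m → ℝ) : Fin m → ℝ :=
  fun c => fderiv ℝ L (b, ψ b, jet1 ψ b) (0, 0, Pi.single A (Pi.single c 1))

/-- The Euler–Lagrange expression `δL/δψ^A` of a first-order Lagrangian. -/
def eulerLagrange (L : (Fin m → ℝ) × (Fin N → ℝ) × (Fin N → Fin m → ℝ) → ℝ)
    (ψ : (Fin m → ℝ) → Fin N → ℝ) (A : Fin N) (b : Fin m → ℝ) : ℝ :=
  fderiv ℝ L (b, ψ b, jet1 ψ b) (0, Pi.single A 1, 0) - divergence (momentum L ψ A) b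

/-- The canonical momenta `∂L̃/∂v^A_μ` of the covariantized Lagrangian along `s`. -/
def covMomentum (L : (Fin m → ℝ) × (Fin N → ℝ) × (Fin N → Fin m → ℝ) → ℝ)
    (η : (Fin m → ℝ) → Fin m → ℝ) (φ : (Fin m → ℝ) → Fin N → ℝ) (A : Fin N) (x : Fin m → ℝ) :
    Fin m → ℝ :=
  fun μ => fderiv ℝ (Ltilde L) (covSect η φ x) (0, 0, 0, 0, Pi.single A (Pi.single μ 1))

/-- The Euler–Lagrange expression `δL̃/δφ^A` of the covariantized Lagrangian, at the covariance
field `η` and the field `φ`. -/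
def covEulerLagrange (L : (Fin m → ℝ) × (Fin N → ℝ) × (Fin N → Fin m → ℝ) → ℝ)
    (η : (Fin m → ℝ) → Fin m → ℝ) (φ : (Fin m → ℝ) → Fin N → ℝ) (A : Fin N) (x : Fin m → ℝ) : ℝ :=
  fderiv ℝ (Ltilde L) (covSect η φ x) (0, 0, 0, Pi.single A 1, 0)
    - divergence (covMomentum L η φ A) x

theorem differentiableAt_Ltilde {J : Fin m → Fin m → ℝ} {y : Fin N → ℝ} {v : Fin N → Fin m → ℝ}
    (hL : Differentiable ℝ L) (hJ : (Matrix.of J).det ≠ 0) :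
    DifferentiableAt ℝ (Ltilde L) (x, b, J, y, v) := by
  have hproj : DifferentiableAt ℝ (fun p : (Fin m → ℝ) × (Fin m → ℝ) × (Fin m → Fin m → ℝ) ×
      (Fin N → ℝ) × (Fin N → Fin m → ℝ) => p.2.2.1) (x, b, J, y, v) := by fun_prop
  have hdet := differentiableAt_det hproj
  have hinv := differentiableAt_inv_apply hproj hJ
  unfold Ltilde
  refine DifferentiableAt.mul ((hL _).comp _ ?_) hdet
  refine DifferentiableAt.prodMk (by fun_prop) (DifferentiableAt.prodMk (by fun_prop) ?_)
  exact differentiableAt_pi.2 fun A => differentiableAt_pi.2 fun c =>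
    DifferentiableAt.fun_sum fun μ _ => DifferentiableAt.mul (by fun_prop) (hinv μ c)

theorem fderiv_Ltilde_vertical {J : Fin m → Fin m → ℝ} {y : Fin N → ℝ} {v : Fin N → Fin m → ℝ}
    (hL : Differentiable ℝ L) (hJ : (Matrix.of J).det ≠ 0) (w : Fin N → ℝ)
    (u : Fin N → Fin m → ℝ) :
    fderiv ℝ (Ltilde L) (x, b, J, y, v) (0, 0, 0, w, u)
      = fderiv ℝ L (b, y, velocityMul (Matrix.of J)⁻¹ v) (0, w, velocityMul (Matrix.of J)⁻¹ u)
        * (Matrix.of J).det := by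
  have hline : ∀ t : ℝ, Ltilde L ((x, b, J, y, v) + t • (0, 0, 0, w, u))
      = L ((b, y, velocityMul (Matrix.of J)⁻¹ v) + t • (0, w, velocityMul (Matrix.of J)⁻¹ u))
        * (Matrix.of J).det := by
    intro t
    simp only [Prod.smul_mk, Prod.mk_add_mk, smul_zero, add_zero, ← map_smul, ← map_add]
    rfl
  rw [← (differentiableAt_Ltilde hL hJ).lineDeriv_eq_fderiv, ← (hL _).lineDeriv_eq_fderiv]
  simp only [lineDeriv, hline, deriv_mul_const_field]

theorem fderiv_velocity_row (q : (Fin m → ℝ) × (Fin N → ℝ) × (Fin N → Fin m → ℝ)) (A : Fin N)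
    (w : Fin m → ℝ) :
    fderiv ℝ L q (0, 0, Pi.single A w)
      = w ⬝ᵥ fun c => fderiv ℝ L q (0, 0, Pi.single A (Pi.single c 1)) := by
  let row := (fderiv ℝ L q).toLinearMap ∘ₗ LinearMap.inr ℝ _ _ ∘ₗ LinearMap.inr ℝ _ _ ∘ₗ
    LinearMap.single ℝ (fun _ => Fin m → ℝ) A
  calc row w = row (∑ c, w c • Pi.single c 1) := by rw [← pi_eq_sum_univ' w]
    _ = ∑ c, w c * row (Pi.single c 1) := by simp only [map_sum, map_smul, smul_eq_mul]

theorem fderiv_Ltilde_covSect (hL : Differentiable ℝ L) (hη : DifferentiableAt ℝ η x)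
    (hη' : DifferentiableAt ℝ η' (η x)) (hinv : Function.LeftInverse η' η)
    (hφ : DifferentiableAt ℝ φ x) (w : Fin N → ℝ) (u : Fin N → Fin m → ℝ) :
    fderiv ℝ (Ltilde L) (covSect η φ x) (0, 0, 0, w, u)
      = fderiv ℝ L (η x, (φ ∘ η') (η x), jet1 (φ ∘ η') (η x))
          (0, w, velocityMul (Matrix.of (jacobian η x))⁻¹ u) * (Matrix.of (jacobian η x)).det := by
  rw [covSect, fderiv_Ltilde_vertical hL (det_jacobian_ne_zero hη hη' hinv),
    jet1_comp_leftInverse hη hη' hinv hφ, Function.comp_apply, hinv x]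

theorem covMomentum_eq_adjugate_mulVec (hL : Differentiable ℝ L) (hη : DifferentiableAt ℝ η x)
    (hη' : DifferentiableAt ℝ η' (η x)) (hinv : Function.LeftInverse η' η)
    (hφ : DifferentiableAt ℝ φ x) (A : Fin N) :
    covMomentum L η φ A x
      = (Matrix.of (jacobian η x)).adjugate.mulVec (momentum L (φ ∘ η') A (η x)) := by
  have hadj : (Matrix.of (jacobian η x)).adjugate
      = (Matrix.of (jacobian η x)).det • (Matrix.of (jacobian η x))⁻¹ := by
    rw [Matrix.inv_def, smul_smul, Ring.mul_inverse_cancel _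
      (det_jacobian_ne_zero hη hη' hinv).isUnit, one_smul]
  funext μ
  rw [covMomentum, fderiv_Ltilde_covSect hL hη hη' hinv hφ, velocityMul_single,
    Matrix.single_one_vecMul, hadj, Matrix.smul_mulVec, Pi.smul_apply, smul_eq_mul, mul_comm]
  exact congrArg _ (fderiv_velocity_row _ A _)

theorem differentiable_momentum (hL : ContDiff ℝ 2 L) (hψ : ContDiff ℝ 2 ψ) (A : Fin N) :
    Differentiable ℝ (momentum L ψ A) := by
  have hdL : Differentiable ℝ (fderiv ℝ L) :=
    (hL.fderiv_right (m := 1) (by norm_num)).differentiable (by norm_num)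
  have hjet : Differentiable ℝ fun b => (b, ψ b, jet1 ψ b) :=
    differentiable_id.prodMk ((hψ.differentiable (by norm_num)).prodMk fun b =>
      differentiableAt_jet1 hψ.contDiffAt)
  exact differentiable_pi.2 fun c => (hdL.comp hjet).clm_apply (differentiable_const _)

theorem covEulerLagrange_eq (hL : ContDiff ℝ 2 L) (hη : ContDiff ℝ 2 η) (hη' : ContDiff ℝ 2 η')
    (hinv : Function.LeftInverse η' η) (hφ : ContDiff ℝ 2 φ) (A : Fin N) (x : Fin m → ℝ) :
    covEulerLagrange L η φ A x
      = (Matrix.of (jacobian η x)).det * eulerLagrange L (φ ∘ η') A (η x) := by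
  have hLd : Differentiable ℝ L := hL.differentiable (by norm_num)
  have hηd : Differentiable ℝ η := hη.differentiable (by norm_num)
  have hη'd : Differentiable ℝ η' := hη'.differentiable (by norm_num)
  have hφd : Differentiable ℝ φ := hφ.differentiable (by norm_num)
  have hmomentum : covMomentum L η φ A = fun y =>
      (Matrix.of (jacobian η y)).adjugate.mulVec (momentum L (φ ∘ η') A (η y)) :=
    funext fun y => covMomentum_eq_adjugate_mulVec hLd (hηd y) (hη'd _) hinv (hφd y) A
  have hforce : fderiv ℝ (Ltilde L) (covSect η φ x) (0, 0, 0, Pi.single A 1, 0)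
      = (Matrix.of (jacobian η x)).det
        * fderiv ℝ L (η x, (φ ∘ η') (η x), jet1 (φ ∘ η') (η x)) (0, Pi.single A 1, 0) := by
    rw [fderiv_Ltilde_covSect hLd (hηd x) (hη'd _) hinv (hφd x), map_zero, mul_comm]
  rw [covEulerLagrange, eulerLagrange, hmomentum, hforce, divergence_adjugate_jacobian_mulVec
    hη.contDiffAt (differentiable_momentum hL (hφ.comp hη') A _), mul_sub]

end EulerLagrange

theorem stmt_1_general {m N : ℕ} {L : (Fin m → ℝ) × (Fin N → ℝ) × (Fin N → Fin m → ℝ) → ℝ}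
    (hL : ContDiff ℝ 2 L) {η η' : (Fin m → ℝ) → Fin m → ℝ} (hη : ContDiff ℝ 2 η)
    (hη' : ContDiff ℝ 2 η') (hinv : Function.LeftInverse η' η)
    (hinv' : Function.RightInverse η' η) {φ : (Fin m → ℝ) → Fin N → ℝ} (hφ : ContDiff ℝ 2 φ) :
    (∀ A x, covEulerLagrange L η φ A x = 0) ↔ ∀ A b, eulerLagrange L (φ ∘ η') A b = 0 := by
  have hdet : ∀ x, (Matrix.of (jacobian η x)).det ≠ 0 := fun x =>
    det_jacobian_ne_zero (hη.differentiable (by norm_num) x)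
      (hη'.differentiable (by norm_num) _) hinv
  simp only [covEulerLagrange_eq hL hη hη' hinv hφ, mul_eq_zero, hdet, false_or]
  exact forall_congr' fun A =>
    (hinv'.surjective.forall (p := fun b => eulerLagrange L (φ ∘ η') A b = 0)).symm

/-- the Euler–Lagrange equations of `L̃` with respect to `φ` hold iff
`ψ := φ ∘ η⁻¹` satisfies the Euler–Lagrange equations of `L`. -/
theorem stmt_1 {m N : ℕ}
    (L : (Fin m → ℝ) × (Fin N → ℝ) × (Fin N → Fin m → ℝ) → ℝ)
    (hL : ContDiff ℝ (⊤ : ℕ∞) L)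
    (η η' : (Fin m → ℝ) → (Fin m → ℝ))
    (hη : ContDiff ℝ (⊤ : ℕ∞) η) (hη' : ContDiff ℝ (⊤ : ℕ∞) η')
    (hη1 : Function.LeftInverse η' η) (hη2 : Function.RightInverse η' η)
    (φ : (Fin m → ℝ) → (Fin N → ℝ)) (hφ : ContDiff ℝ (⊤ : ℕ∞) φ) :
    (∀ (A : Fin N) (x : Fin m → ℝ),
        fderiv ℝ (Ltilde L) (covSect η φ x) (0, 0, 0, Pi.single A 1, 0)
          - ∑ μ : Fin m, fderiv ℝ
              (fun x' => fderiv ℝ (Ltilde L) (covSect η φ x')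
                (0, 0, 0, 0, Pi.single A (Pi.single μ 1))) x (Pi.single μ 1) = 0)
      ↔
    (∀ (A : Fin N) (b : Fin m → ℝ),
        fderiv ℝ L (b, (φ ∘ η') b, jet1 (φ ∘ η') b) (0, Pi.single A 1, 0)
          - ∑ c : Fin m, fderiv ℝ
              (fun b' => fderiv ℝ L (b', (φ ∘ η') b', jet1 (φ ∘ η') b')
                (0, 0, Pi.single A (Pi.single c 1))) b (Pi.single c 1) = 0) :=
  stmt_1_general (contDiff_infty.1 hL 2) (contDiff_infty.1 hη 2) (contDiff_infty.1 hη' 2) hη1 hη2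
    (contDiff_infty.1 hφ 2)
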